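/- If (p_{XY}, p_{Z|XY}) is computable with perfect security (i.e., there exists a joint distribution p(x,y,m,z) with marginal p_{XY}, with p(z|x,y) = p_{Z|XY}(z|x,y), satisfying the Markov chains M − X − (Y,Z), M − (Y,Z) − X, and Z − (M,Y) − X), then each equivalence class 𝒳_i of the relation ≡ is column monochromatic: for every y ∈ 𝒴 and distinct x, x' ∈ 𝒳_i with p_{XY}(x,y) > 0 and p_{XY}(x',y) > 0, one has p_{Z|XY}(z|x,y) = p_{Z|XY}(z|x',y) for all z ∈ 𝒵. -/

import Mathlib

open Finset

/-- If `(p_{XY}, p_{Z|XY})` is computable with perfect security (there is a joint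
distribution `p(m,x,y,z)` with the right marginal, correct output distribution, and
Markov chains `M − X − (Y,Z)`, `M − (Y,Z) − X`, `Z − (M,Y) − X`), then every
equivalence class of `≡` is column monochromatic. -/
theorem stmt_3 {M X Y Z : Type} [Fintype M] [Fintype X] [Fintype Y] [Fintype Z]
    (pXY : X → Y → ℝ) (pZ : Z → X → Y → ℝ)
    (hXYnn : ∀ x y, 0 ≤ pXY x y) (hXYsum : ∑ x, ∑ y, pXY x y = 1)
    (hZnn : ∀ z x y, 0 ≤ pZ z x y) (hZsum : ∀ x y, ∑ z, pZ z x y = 1)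
    -- the joint distribution induced by a perfectly secure protocol
    (p : M → X → Y → Z → ℝ)
    (hnn : ∀ m x y z, 0 ≤ p m x y z)
    (hmarg : ∀ x y, ∑ m, ∑ z, p m x y z = pXY x y)
    -- correctness: p(z|x,y) = p_{Z|XY}(z|x,y)
    (hcorrect : ∀ x y z, pXY x y > 0 → (∑ m, p m x y z) / pXY x y = pZ z x y)
    (pX : X → ℝ) (hpX : ∀ x, pX x = ∑ m, ∑ y, ∑ z, p m x y z)
    (pMX : M → X → ℝ) (hpMX : ∀ m x, pMX m x = ∑ y, ∑ z, p m x y z)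
    (pXYZ : X → Y → Z → ℝ) (hpXYZ : ∀ x y z, pXYZ x y z = ∑ m, p m x y z)
    (pYZ : Y → Z → ℝ) (hpYZ : ∀ y z, pYZ y z = ∑ m, ∑ x, p m x y z)
    (pMYZ : M → Y → Z → ℝ) (hpMYZ : ∀ m y z, pMYZ m y z = ∑ x, p m x y z)
    (pMY : M → Y → ℝ) (hpMY : ∀ m y, pMY m y = ∑ x, ∑ z, p m x y z)
    (pMXY : M → X → Y → ℝ) (hpMXY : ∀ m x y, pMXY m x y = ∑ z, p m x y z)
    -- Markov chain M − X − (Y,Z)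
    (hMC1 : ∀ m x y z, pXYZ x y z > 0 →
      p m x y z / pXYZ x y z = pMX m x / pX x)
    -- Markov chain M − (Y,Z) − X
    (hMC2 : ∀ m x y z, pXYZ x y z > 0 →
      p m x y z / pXYZ x y z = pMYZ m y z / pYZ y z)
    -- Markov chain Z − (M,Y) − X
    (hMC3 : ∀ m x y z, pMXY m x y > 0 →
      p m x y z / pMXY m x y = pMYZ m y z / pMY m y)
    -- the relation ∼
    (sim : X → X → Prop)
    (hsim : ∀ x x', sim x x' ↔ ∃ (y : Y) (z : Z),
      pXY x y > 0 ∧ pXY x' y > 0 ∧ pZ z x y > 0 ∧ pZ z x' y > 0) :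
    -- column monochromaticity of each equivalence class of ≡
    ∀ x x', Relation.ReflTransGen sim x x' →
      ∀ y, pXY x y > 0 → pXY x' y > 0 → ∀ z, pZ z x y = pZ z x' y := by
  have hXYZnn : ∀ x y z, 0 ≤ pXYZ x y z := fun x y z => by
    rw [hpXYZ]; exact sum_nonneg fun m _ => hnn m x y z
  have hXYZ : ∀ x y z, pXY x y > 0 → pXYZ x y z = pZ z x y * pXY x y := fun x y z h => by
    rw [← hcorrect x y z h, hpXYZ, div_mul_cancel₀ _ h.ne']
  -- the conditional law of `M` given `X` is constant along `sim`
  have hconst : ∀ x x', Relation.ReflTransGen sim x x' →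
      ∀ m, pMX m x / pX x = pMX m x' / pX x' := by
    intro x x' h
    induction h with
    | refl => exact fun _ => rfl
    | @tail b c _ hbc ih =>
      intro m
      obtain ⟨y, z, hb, hc, hzb, hzc⟩ := (hsim b c).1 hbc
      have hb' : pXYZ b y z > 0 := by rw [hXYZ b y z hb]; positivity
      have hc' : pXYZ c y z > 0 := by rw [hXYZ c y z hc]; positivity
      rw [ih m, ← hMC1 m b y z hb', ← hMC1 m c y z hc', hMC2 m b y z hb', hMC2 m c y z hc']
  have hfactor : ∀ m x y z, p m x y z = pXYZ x y z * (pMX m x / pX x) := by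
    intro m x y z
    rcases (hXYZnn x y z).eq_or_lt with h | h
    · have h0 : ∑ m, p m x y z = 0 := by rw [← hpXYZ, ← h]
      rw [← h, zero_mul]
      exact (sum_eq_zero_iff_of_nonneg fun m _ => hnn m x y z).1 h0 m (mem_univ m)
    · rw [← hMC1 m x y z h, mul_div_cancel₀ _ h.ne']
  have hMXY : ∀ m x y, pMXY m x y = pXY x y * (pMX m x / pX x) := by
    intro m x y
    rw [hpMXY, ← hmarg, sum_comm, sum_mul]
    exact sum_congr rfl fun z _ => by rw [hfactor, hpXYZ]
  have houtput : ∀ m x y z, pXY x y > 0 → pMX m x / pX x > 0 →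
      pZ z x y = pMYZ m y z / pMY m y := by
    intro m x y z h hq
    have hpos : pMXY m x y > 0 := by rw [hMXY]; exact mul_pos h hq
    rw [← hMC3 m x y z hpos, hMXY, hfactor, mul_div_mul_right _ _ hq.ne', hpXYZ,
      hcorrect x y z h]
  intro x x' hxx' y hx hx' z
  obtain ⟨m, hm⟩ : ∃ m, 0 < pMXY m x y := by
    by_contra! hle
    have hsum : pXY x y ≤ 0 := by
      rw [← hmarg]
      exact sum_nonpos fun m _ => (hpMXY m x y).symm.trans_le (hle m)
    exact hx.not_ge hsum
  have hq : pMX m x / pX x > 0 := by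
    rw [hMXY] at hm
    exact (mul_pos_iff_of_pos_left hx).1 hm
  rw [houtput m x y z hx hq, houtput m x' y z hx' (hconst x x' hxx' m ▸ hq)]
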